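/- Let p be a prime, and M, N finite free ℤ_p-modules of the same rank d, each equipped with a linear operator T. Then the semisimplifications of M ⊗ 𝔽_p and N ⊗ 𝔽_p are isomorphic as 𝔽_p[T]-modules if and only if for every n with 1 ≤ n ≤ d, tr(T^n | M) ≡ tr(T^n | N) mod p^{1 + v_p(n)}. -/

import Mathlib

/-!
Put `P(X) = det (1 - X T₁)`, `Q(X) = det (1 - X T₂)` and `F = P / Q`, a power series over `ℤ_[p]`
with constant term `1`. By Jacobi's formula the coefficient of `X ^ n` in `-P' / P` is
`tr (T₁ ^ (n + 1))` (`charpolyRev_logDeriv`), so the trace congruences say that the coefficient of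
`X ^ n` in `F' / F` is divisible by `p ^ (1 + v_p (n + 1))` for all `n < d`. Since `P` and `Q` have
degree at most `d`, the congruence of characteristic polynomials says that
`F ≡ 1` modulo `(p, X ^ (d + 1))`.

These two conditions on a power series `F` with constant term `1` are equivalent
(`modEq_one_iff_logDeriv_dvd`). If `F = 1 - c X ^ j + ⋯`, either condition forces `p ∣ c`: the first
one trivially, the second one because the coefficient of `X ^ (j - 1)` in `F' / F` is `-j c`. Once
`p ∣ c`, dividing `F` by `1 - c X ^ j` affects neither condition: the factor is `1` modulo `p`, and
its logarithmic derivative has coefficients `-j c ^ m` in degree `j m - 1`, which are divisible by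
`p ^ (v_p (j) + m)`, while `m ≥ 1 + v_p (m)`. Hence one can remove the terms of `F - 1` one degree
at a time until nothing is left below degree `d + 1`.
-/

/-! ### Jacobi's formula for the reversed characteristic polynomial -/

open PowerSeries in
/-- The geometric series `∑ Aⁿ Xⁿ`, as a matrix of power series, is a right inverse of `1 - X A`. -/
lemma one_sub_X_smul_mul_geom {R ι : Type*} [CommRing R] [Fintype ι] [DecidableEq ι]
    (A : Matrix ι ι R) :
    (1 - (X : R⟦X⟧) • A.map (C : R →+* R⟦X⟧)) *
      (Matrix.of fun i j => PowerSeries.mk fun n => (A ^ n) i j) = 1 := by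
  ext i j n
  rw [sub_mul, one_mul, smul_mul_assoc, Matrix.sub_apply, Matrix.smul_apply, smul_eq_mul, map_sub]
  rcases n with _ | n
  · by_cases h : i = j <;> simp [h, Matrix.one_apply]
  · rw [coeff_succ_X_mul, Matrix.mul_apply, map_sum]
    simp only [Matrix.of_apply, coeff_mk, Matrix.map_apply, coeff_C_mul]
    rw [pow_succ', Matrix.mul_apply, sub_self]
    by_cases h : i = j <;> simp [h, Matrix.one_apply, coeff_one]

open PowerSeries in
/-- Jacobi's formula for `det (1 - X A)`. It is obtained by expanding
`det (1 - (X + ε) A) = det (1 - X A) * det (1 - ε (1 - X A)⁻¹ A)` to first order in `ε`. -/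
lemma charpolyRev_logDeriv {R ι : Type*} [CommRing R] [Fintype ι] [DecidableEq ι]
    (A : Matrix ι ι R) :
    d⁄dX R (A.charpolyRev : R⟦X⟧) =
      -((A.charpolyRev : R⟦X⟧) * PowerSeries.mk fun n => (A ^ (n + 1)).trace) := by
  set V : Matrix ι ι R⟦X⟧ := Matrix.of fun i j => PowerSeries.mk fun n => (A ^ n) i j with hV
  set B : Matrix ι ι R⟦X⟧ := A.map (C : R →+* R⟦X⟧) with hB
  set U : Matrix ι ι R⟦X⟧ := 1 - (X : R⟦X⟧) • B with hU
  have hUV : U * V = 1 := one_sub_X_smul_mul_geom A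
  have htr : (V * B).trace = PowerSeries.mk fun n => (A ^ (n + 1)).trace := by
    ext n
    simp only [Matrix.trace, Matrix.diag, Matrix.mul_apply, map_sum, coeff_mk, hV, hB, pow_succ,
      Matrix.of_apply, Matrix.map_apply, coeff_mul_C]
  have hdet : U.det = (A.charpolyRev : R⟦X⟧) := by
    rw [Matrix.charpolyRev, ← Polynomial.coeToPowerSeries.ringHom_apply, RingHom.map_det]
    congr 1
    ext1 i j
    by_cases h : i = j <;> simp [hU, hB, h] <;> exact mul_comm _ _
  set f : Polynomial R⟦X⟧ := A.charpolyRev.map (C : R →+* R⟦X⟧) with hf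
  have h1 : Polynomial.taylor (X : R⟦X⟧) f
      = Polynomial.C U.det *
        (1 + (Polynomial.X : Polynomial R⟦X⟧) • (-(V * B)).map Polynomial.C).det := by
    have h2 : Polynomial.taylor (X : R⟦X⟧) f =
        (U.map Polynomial.C - (Polynomial.X : Polynomial R⟦X⟧) • B.map Polynomial.C).det := by
      rw [← Polynomial.taylorAlgHom_apply, hf, Matrix.charpolyRev, ← Polynomial.coe_mapRingHom,
        RingHom.map_det, AlgHom.map_det]
      congr 1
      ext1 i j
      by_cases h : i = j <;> simp [hU, hB, h] <;> ring
    rw [h2, ← Polynomial.C.mapMatrix_apply, ← Polynomial.C.mapMatrix_apply,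
      RingHom.map_det, ← Matrix.det_mul, mul_add, mul_one, Matrix.mul_smul,
      ← Polynomial.C.mapMatrix_apply, ← map_mul, mul_neg, ← mul_assoc, hUV, one_mul, map_neg,
      smul_neg, sub_eq_add_neg]
  have h3 := congrArg (fun q => q.coeff 1) h1
  have h4 := Matrix.derivative_det_one_add_X_smul (-(V * B))
  rw [← Polynomial.coeff_zero_eq_eval_zero, Polynomial.coeff_derivative] at h4
  simp only [Polynomial.coeff_C_mul, Polynomial.taylor_coeff_one] at h3
  simp only [zero_add, Nat.cast_zero, mul_one] at h4
  rw [h4, Matrix.trace_neg, htr, hdet, hf, Polynomial.derivative_map, Polynomial.eval_map,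
    Polynomial.eval₂_C_X_eq_coe] at h3
  rw [derivative_coe, h3, mul_neg]

/-! ### Logarithmic derivatives of power series -/

section LogDeriv

open PowerSeries

variable {R : Type*} [CommRing R]

/-- The logarithmic derivative `u' / u` of an invertible power series. -/
noncomputable def psLogDeriv (u : R⟦X⟧ˣ) : R⟦X⟧ := d⁄dX R (u : R⟦X⟧) * ((u⁻¹ : R⟦X⟧ˣ) : R⟦X⟧)

lemma psLogDeriv_mul (u v : R⟦X⟧ˣ) : psLogDeriv (u * v) = psLogDeriv u + psLogDeriv v := by
  simp only [psLogDeriv, Units.val_mul, Derivation.leibniz, mul_inv, smul_eq_mul]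
  linear_combination (d⁄dX R (v : R⟦X⟧) * ((v⁻¹ : R⟦X⟧ˣ) : R⟦X⟧)) * u.mul_inv
    + (d⁄dX R (u : R⟦X⟧) * ((u⁻¹ : R⟦X⟧ˣ) : R⟦X⟧)) * v.mul_inv

lemma psLogDeriv_eq_of_mul {u : R⟦X⟧ˣ} {g : R⟦X⟧} (h : d⁄dX R (u : R⟦X⟧) = u * g) :
    psLogDeriv u = g := by
  rw [psLogDeriv, h, mul_right_comm, u.mul_inv, one_mul]

lemma psLogDeriv_div (u v : R⟦X⟧ˣ) : psLogDeriv (u * v⁻¹) = psLogDeriv u - psLogDeriv v := by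
  rw [eq_sub_iff_add_eq, ← psLogDeriv_mul, inv_mul_cancel_right]

lemma X_pow_dvd_psLogDeriv {u : R⟦X⟧ˣ} {j : ℕ} (h : X ^ (j + 1) ∣ (u : R⟦X⟧) - 1) :
    X ^ j ∣ psLogDeriv u := by
  refine Dvd.dvd.mul_right (X_pow_dvd_iff.2 fun m hm => ?_) _
  have h1 := X_pow_dvd_iff.1 h (m + 1) (by lia)
  rw [map_sub, coeff_one, if_neg (Nat.succ_ne_zero m), sub_zero] at h1
  rw [coeff_derivative, h1, zero_mul]

lemma isUnit_one_sub (c : R) (j : ℕ) : IsUnit (1 - C c * X ^ (j + 1) : R⟦X⟧) := by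
  rw [PowerSeries.isUnit_iff_constantCoeff]
  simp

/-- The invertible power series `1 - c X ^ (j + 1)`. -/
noncomputable def oneSubUnit (c : R) (j : ℕ) : R⟦X⟧ˣ := (isUnit_one_sub c j).unit

lemma coe_oneSubUnit (c : R) (j : ℕ) :
    (oneSubUnit c j : R⟦X⟧) = 1 - C c * X ^ (j + 1) := rfl

lemma psLogDeriv_oneSubUnit (c : R) (j : ℕ) :
    psLogDeriv (oneSubUnit c j) = PowerSeries.mk fun n =>
      if (j + 1) ∣ (n + 1) then -((j + 1 : ℕ) : R) * c ^ ((n + 1) / (j + 1)) else 0 := by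
  apply psLogDeriv_eq_of_mul
  ext n
  rw [coe_oneSubUnit, coeff_derivative, sub_mul, one_mul, map_sub, map_sub, mul_assoc, coeff_C_mul,
    coeff_C_mul, coeff_X_pow, coeff_X_pow_mul', coeff_one, coeff_mk, if_neg (Nat.succ_ne_zero n)]
  rcases lt_trichotomy n j with h | rfl | h
  · have h1 : ¬ (j + 1 ∣ n + 1) := fun h' => by have := Nat.le_of_dvd (by lia) h'; lia
    rw [if_neg (by lia), if_neg h1, if_neg (by lia)]
    simp
  · simp
    ring
  · obtain ⟨k, rfl⟩ : ∃ k, n = k + (j + 1) := ⟨n - (j + 1), by lia⟩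
    rw [if_neg (by lia), if_pos (show j + 1 ≤ k + (j + 1) by lia), coeff_mk, Nat.add_sub_cancel,
      show k + (j + 1) + 1 = (k + 1) + (j + 1) by ring, Nat.add_div_right _ (Nat.succ_pos j)]
    simp only [Nat.dvd_add_self_right]
    split_ifs
    · rw [pow_succ]; ring
    · simp

end LogDeriv

/-! ### Congruences over the p-adic integers -/

section Padic

open PowerSeries

variable {p : ℕ} [Fact p.Prime]

lemma PadicInt.toZMod_eq_zero_iff_dvd (x : ℤ_[p]) : PadicInt.toZMod x = 0 ↔ (p : ℤ_[p]) ∣ x := by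
  rw [← RingHom.mem_ker, PadicInt.ker_toZMod, PadicInt.maximalIdeal_eq_span_p,
    Ideal.mem_span_singleton]

/-- If `p ∣ c`, the `n`-th coefficient of the logarithmic derivative of `1 - c X ^ (j + 1)` is
divisible by `p ^ (1 + v_p (n + 1))`. -/
lemma dvd_coeff_psLogDeriv_oneSubUnit {c : ℤ_[p]} (hc : (p : ℤ_[p]) ∣ c) (j n : ℕ) :
    (p : ℤ_[p]) ^ (1 + padicValNat p (n + 1)) ∣ coeff n (psLogDeriv (oneSubUnit c j)) := by
  rw [psLogDeriv_oneSubUnit, coeff_mk]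
  split_ifs with h
  · obtain ⟨m, hm⟩ := h
    have hm0 : m ≠ 0 := by rintro rfl; simp at hm
    rw [hm, Nat.mul_div_cancel_left _ (Nat.succ_pos j), padicValNat.mul (Nat.succ_ne_zero j) hm0]
    have h1 : (p : ℤ_[p]) ^ padicValNat p (j + 1) ∣ ((j + 1 : ℕ) : ℤ_[p]) := by
      exact_mod_cast Nat.cast_dvd_cast (α := ℤ_[p]) (pow_padicValNat_dvd (p := p) (n := j + 1))
    have h2 : 1 + padicValNat p m ≤ m := by
      have h3 := Nat.le_of_dvd (Nat.pos_of_ne_zero hm0) (pow_padicValNat_dvd (p := p) (n := m))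
      have h4 := Nat.lt_pow_self (n := padicValNat p m) (Fact.out : p.Prime).one_lt
      lia
    have h5 : (p : ℤ_[p]) ^ (1 + padicValNat p m) ∣ c ^ m :=
      (pow_dvd_pow _ h2).trans (pow_dvd_pow_of_dvd hc m)
    rw [show 1 + (padicValNat p (j + 1) + padicValNat p m)
      = padicValNat p (j + 1) + (1 + padicValNat p m) by ring, pow_add, neg_mul, dvd_neg]
    exact mul_dvd_mul h1 h5
  · exact dvd_zero _

lemma PadicInt.dvd_of_pow_dvd_natCast_mul {c : ℤ_[p]} {j : ℕ} (hj : j ≠ 0)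
    (h : (p : ℤ_[p]) ^ (1 + padicValNat p j) ∣ (j : ℤ_[p]) * c) : (p : ℤ_[p]) ∣ c := by
  obtain ⟨u, hu⟩ := pow_padicValNat_dvd (p := p) (n := j)
  have hpu : ¬ p ∣ u := fun ⟨w, hw⟩ => by
    refine pow_succ_padicValNat_not_dvd (p := p) hj ⟨w, ?_⟩
    rw [pow_succ, mul_assoc, ← hw, ← hu]
  have hp0 : (p : ℤ_[p]) ≠ 0 := PadicInt.prime_p.ne_zero
  have hcast : (j : ℤ_[p]) = (p : ℤ_[p]) ^ padicValNat p j * u := by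
    conv_lhs => rw [hu]
    push_cast
    rfl
  rw [hcast, mul_assoc, add_comm, pow_succ, mul_dvd_mul_iff_left (pow_ne_zero _ hp0)] at h
  refine (PadicInt.prime_p.dvd_or_dvd h).resolve_left fun h' => hpu ?_
  rwa [← PadicInt.toZMod_eq_zero_iff_dvd, map_natCast, ZMod.natCast_eq_zero_iff] at h'

/-- A `p`-adic power series with `F ≡ 1` modulo `X ^ (j + 1)` satisfies `F ≡ 1` modulo
`(p, X ^ (d + 1))` if and only if the coefficients of `X ^ n` in `F' / F` are divisible by
`p ^ (1 + v_p (n + 1))` for `n < d`. The induction is on `k = d - j`. -/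
lemma modEq_one_iff_logDeriv_dvd (d k : ℕ) : ∀ (j : ℕ), j + k = d → ∀ F : ℤ_[p]⟦X⟧ˣ,
    X ^ (j + 1) ∣ (F : ℤ_[p]⟦X⟧) - 1 →
    (X ^ (d + 1) ∣ PowerSeries.map (PadicInt.toZMod (p := p)) (F : ℤ_[p]⟦X⟧) - 1 ↔
      ∀ n < d, (p : ℤ_[p]) ^ (1 + padicValNat p (n + 1)) ∣ coeff n (psLogDeriv F)) := by
  induction k with
  | zero =>
    rintro j rfl F hF
    refine iff_of_true ?_ fun n hn => ?_
    · simpa using map_dvd (PowerSeries.map (PadicInt.toZMod (p := p))) hF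
    · rw [X_pow_dvd_iff.1 (X_pow_dvd_psLogDeriv hF) n (by lia)]
      exact dvd_zero _
  | succ k ih =>
    intro j hjk F hF
    set c : ℤ_[p] := -coeff (j + 1) (F : ℤ_[p]⟦X⟧) with hc
    set E := oneSubUnit c j with hE
    have hFE : F * E⁻¹ * E = F := inv_mul_cancel_right F E
    have hF' : X ^ (j + 1 + 1) ∣ ((F * E⁻¹ : ℤ_[p]⟦X⟧ˣ) : ℤ_[p]⟦X⟧) - 1 := by
      have h1 : ((F * E⁻¹ : ℤ_[p]⟦X⟧ˣ) : ℤ_[p]⟦X⟧) - 1 = ((F : ℤ_[p]⟦X⟧) - E) * ↑(E⁻¹) := by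
        rw [sub_mul, E.mul_inv, Units.val_mul]
      rw [h1]
      refine Dvd.dvd.mul_right (X_pow_dvd_iff.2 fun m hm => ?_) _
      rcases Nat.lt_succ_iff_lt_or_eq.1 hm with h | rfl
      · have h2 := X_pow_dvd_iff.1 hF m h
        rw [map_sub] at h2
        rw [hE, coe_oneSubUnit, map_sub, map_sub, coeff_C_mul, coeff_X_pow, if_neg h.ne]
        simpa using h2
      · rw [hE, coe_oneSubUnit, map_sub, map_sub, coeff_C_mul, coeff_X_pow, if_pos rfl, hc,
          coeff_one, if_neg (Nat.succ_ne_zero j)]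
        ring
    have hL : psLogDeriv F = psLogDeriv (F * E⁻¹) + psLogDeriv E := by
      rw [← psLogDeriv_mul, hFE]
    have key : (p : ℤ_[p]) ∣ c →
        (X ^ (d + 1) ∣ PowerSeries.map (PadicInt.toZMod (p := p)) (F : ℤ_[p]⟦X⟧) - 1 ↔
        ∀ n < d, (p : ℤ_[p]) ^ (1 + padicValNat p (n + 1)) ∣ coeff n (psLogDeriv F)) := by
      intro hpc
      have h1 : PowerSeries.map (PadicInt.toZMod (p := p)) (E : ℤ_[p]⟦X⟧) = 1 := by
        rw [hE, coe_oneSubUnit, map_sub, map_mul, map_C,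
          (PadicInt.toZMod_eq_zero_iff_dvd c).2 hpc]
        simp
      have h2 : PowerSeries.map (PadicInt.toZMod (p := p)) (F : ℤ_[p]⟦X⟧) =
          PowerSeries.map (PadicInt.toZMod (p := p)) ((F * E⁻¹ : ℤ_[p]⟦X⟧ˣ) : ℤ_[p]⟦X⟧) := by
        conv_lhs => rw [← hFE, Units.val_mul, map_mul, h1, mul_one]
      rw [h2, ih (j + 1) (by lia) (F * E⁻¹) hF', hL]
      refine forall₂_congr fun n _ => ?_
      rw [map_add, dvd_add_left (dvd_coeff_psLogDeriv_oneSubUnit hpc j n)]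
    have hleft : X ^ (d + 1) ∣ PowerSeries.map (PadicInt.toZMod (p := p)) (F : ℤ_[p]⟦X⟧) - 1 →
        (p : ℤ_[p]) ∣ c := by
      intro h
      have h1 := X_pow_dvd_iff.1 h (j + 1) (by lia)
      rw [map_sub, coeff_map, coeff_one, if_neg (Nat.succ_ne_zero j), sub_zero] at h1
      rw [hc, dvd_neg, ← PadicInt.toZMod_eq_zero_iff_dvd, h1]
    have hright : (∀ n < d, (p : ℤ_[p]) ^ (1 + padicValNat p (n + 1)) ∣ coeff n (psLogDeriv F)) →
        (p : ℤ_[p]) ∣ c := by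
      intro h
      have h1 := h j (by lia)
      -- `F / E` has no terms in degrees `1, …, j + 1`, so only `E` contributes in degree `j`.
      rw [hL, map_add, X_pow_dvd_iff.1 (X_pow_dvd_psLogDeriv hF') j (Nat.lt_succ_self j), zero_add,
        hE, psLogDeriv_oneSubUnit, coeff_mk, if_pos dvd_rfl, Nat.div_self (Nat.succ_pos j),
        pow_one, neg_mul, dvd_neg] at h1
      exact PadicInt.dvd_of_pow_dvd_natCast_mul (Nat.succ_ne_zero j) h1
    exact ⟨fun h => (key (hleft h)).1 h, fun h => (key (hright h)).2 h⟩

/-! ### Characteristic polynomials and their reverses -/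

lemma isUnit_coe_charpolyRev {R ι : Type*} [CommRing R] [Fintype ι] [DecidableEq ι]
    (A : Matrix ι ι R) : IsUnit (A.charpolyRev : R⟦X⟧) := by
  rw [PowerSeries.isUnit_iff_constantCoeff, ← coeff_zero_eq_constantCoeff_apply,
    Polynomial.coeff_coe, Polynomial.coeff_zero_eq_eval_zero, Matrix.eval_charpolyRev]
  exact isUnit_one

lemma coeff_charpolyRev_of_le {R : Type*} [CommRing R] [Nontrivial R] {d n : ℕ}
    (A : Matrix (Fin d) (Fin d) R) (hn : n ≤ d) :
    A.charpolyRev.coeff n = A.charpoly.coeff (d - n) := by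
  rw [← Matrix.reverse_charpoly, Polynomial.coeff_reverse, Matrix.charpoly_natDegree_eq_dim,
    Fintype.card_fin, Polynomial.revAt_le hn]

/-- Both characteristic polynomials have degree `d`, so their congruence can be read off the
coefficients of `det (1 - X A)` and `det (1 - X B)` in degrees at most `d`. -/
lemma map_charpoly_eq_iff {R S : Type*} [CommRing R] [Nontrivial R] [CommRing S] (φ : R →+* S)
    {d : ℕ} (A B : Matrix (Fin d) (Fin d) R) :
    A.charpoly.map φ = B.charpoly.map φ ↔
      X ^ (d + 1) ∣ PowerSeries.map φ (A.charpolyRev : R⟦X⟧)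
        - PowerSeries.map φ (B.charpolyRev : R⟦X⟧) := by
  rw [X_pow_dvd_iff]
  constructor
  · intro h m hm
    have h1 := congrArg (fun q => q.coeff (d - m)) h
    simp only [Polynomial.coeff_map] at h1
    rw [map_sub, coeff_map, coeff_map, Polynomial.coeff_coe, Polynomial.coeff_coe,
      coeff_charpolyRev_of_le A (by lia), coeff_charpolyRev_of_le B (by lia), h1, sub_self]
  · intro h
    ext m
    rw [Polynomial.coeff_map, Polynomial.coeff_map]
    rcases le_or_gt m d with hm | hm
    · have h1 := h (d - m) (by lia)
      rwa [map_sub, coeff_map, coeff_map, Polynomial.coeff_coe, Polynomial.coeff_coe,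
        coeff_charpolyRev_of_le A (by lia), coeff_charpolyRev_of_le B (by lia),
        Nat.sub_sub_self hm, sub_eq_zero] at h1
    · rw [Polynomial.coeff_eq_zero_of_natDegree_lt (p := A.charpoly),
        Polynomial.coeff_eq_zero_of_natDegree_lt (p := B.charpoly)] <;>
      rwa [Matrix.charpoly_natDegree_eq_dim, Fintype.card_fin]

lemma matrix_charpoly_congr_iff {d : ℕ} (A B : Matrix (Fin d) (Fin d) ℤ_[p]) :
    A.charpoly.map (PadicInt.toZMod (p := p)) = B.charpoly.map (PadicInt.toZMod (p := p)) ↔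
      ∀ n < d, (p : ℤ_[p]) ^ (1 + padicValNat p (n + 1)) ∣
        (A ^ (n + 1)).trace - (B ^ (n + 1)).trace := by
  obtain ⟨P, hP⟩ := isUnit_coe_charpolyRev A
  obtain ⟨Q, hQ⟩ := isUnit_coe_charpolyRev B
  have hLP : psLogDeriv P = -PowerSeries.mk fun n => (A ^ (n + 1)).trace :=
    psLogDeriv_eq_of_mul (by rw [hP, charpolyRev_logDeriv, mul_neg])
  have hLQ : psLogDeriv Q = -PowerSeries.mk fun n => (B ^ (n + 1)).trace :=
    psLogDeriv_eq_of_mul (by rw [hQ, charpolyRev_logDeriv, mul_neg])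
  have hmul : (((P * Q⁻¹ : ℤ_[p]⟦X⟧ˣ) : ℤ_[p]⟦X⟧) - 1) = (P - Q : ℤ_[p]⟦X⟧) * ↑(Q⁻¹) := by
    rw [sub_mul, Q.mul_inv, Units.val_mul]
  have hF : X ^ (0 + 1) ∣ ((P * Q⁻¹ : ℤ_[p]⟦X⟧ˣ) : ℤ_[p]⟦X⟧) - 1 := by
    rw [hmul, zero_add, pow_one]
    refine Dvd.dvd.mul_right (X_dvd_iff.2 ?_) _
    rw [hP, hQ, ← coeff_zero_eq_constantCoeff_apply, map_sub, Polynomial.coeff_coe,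
      Polynomial.coeff_coe, Polynomial.coeff_zero_eq_eval_zero, Polynomial.coeff_zero_eq_eval_zero,
      Matrix.eval_charpolyRev, Matrix.eval_charpolyRev, sub_self]
  have hmap : PowerSeries.map (PadicInt.toZMod (p := p)) ((P * Q⁻¹ : ℤ_[p]⟦X⟧ˣ) : ℤ_[p]⟦X⟧) - 1 =
      (PowerSeries.map (PadicInt.toZMod (p := p)) P - PowerSeries.map (PadicInt.toZMod (p := p)) Q)
        * PowerSeries.map (PadicInt.toZMod (p := p)) ↑(Q⁻¹) := by
    rw [← map_sub, ← map_mul, ← hmul, map_sub, map_one]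
  have h := modEq_one_iff_logDeriv_dvd (p := p) d d 0 (zero_add d) (P * Q⁻¹) hF
  rw [hmap, (Q⁻¹.isUnit.map (PowerSeries.map (PadicInt.toZMod (p := p)))).dvd_mul_right, hP, hQ,
    ← map_charpoly_eq_iff] at h
  rw [h]
  refine forall₂_congr fun n _ => ?_
  rw [psLogDeriv_div, hLP, hLQ, ← dvd_neg]
  simp only [map_sub, map_neg, coeff_mk]
  rw [show -(-(A ^ (n + 1)).trace - -(B ^ (n + 1)).trace)
    = (A ^ (n + 1)).trace - (B ^ (n + 1)).trace by ring]

end Padic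


/-- For finite free ℤ_p-modules M, N of the same rank d with operators T, the
semisimplifications of M ⊗ 𝔽_p and N ⊗ 𝔽_p are isomorphic as 𝔽_p[T]-modules — equivalently
(for a single operator over a field) the characteristic polynomials of T on M and N are
congruent mod p — if and only if tr(Tⁿ | M) ≡ tr(Tⁿ | N) mod p^{1 + v_p(n)} for 1 ≤ n ≤ d. -/
theorem mod_p_semisimplification_iff_trace_congruences (p : ℕ) [Fact p.Prime] (d : ℕ)
    (M N : Type*) [AddCommGroup M] [AddCommGroup N] [Module ℤ_[p] M] [Module ℤ_[p] N]
    [Module.Free ℤ_[p] M] [Module.Finite ℤ_[p] M] [Module.Free ℤ_[p] N] [Module.Finite ℤ_[p] N]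
    (hdM : Module.finrank ℤ_[p] M = d) (hdN : Module.finrank ℤ_[p] N = d)
    (T₁ : M →ₗ[ℤ_[p]] M) (T₂ : N →ₗ[ℤ_[p]] N) :
    (T₁.charpoly.map (PadicInt.toZMod (p := p)) = T₂.charpoly.map (PadicInt.toZMod (p := p))) ↔
      (∀ n : ℕ, 1 ≤ n → n ≤ d →
        (p : ℤ_[p]) ^ (1 + padicValNat p n) ∣
          LinearMap.trace ℤ_[p] M (T₁ ^ n) - LinearMap.trace ℤ_[p] N (T₂ ^ n)) := by
  have b₁ := Module.finBasisOfFinrankEq ℤ_[p] M hdM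
  have b₂ := Module.finBasisOfFinrankEq ℤ_[p] N hdN
  rw [← LinearMap.charpoly_toMatrix T₁ b₁, ← LinearMap.charpoly_toMatrix T₂ b₂,
    matrix_charpoly_congr_iff]
  have htr : ∀ n, (LinearMap.toMatrix b₁ b₁ T₁ ^ n).trace - (LinearMap.toMatrix b₂ b₂ T₂ ^ n).trace
      = LinearMap.trace ℤ_[p] M (T₁ ^ n) - LinearMap.trace ℤ_[p] N (T₂ ^ n) := by
    intro n
    rw [LinearMap.trace_eq_matrix_trace ℤ_[p] b₁, LinearMap.trace_eq_matrix_trace ℤ_[p] b₂,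
      LinearMap.toMatrix_pow, LinearMap.toMatrix_pow]
  constructor
  · intro h n h1 hn
    obtain ⟨m, rfl⟩ : ∃ m, n = m + 1 := ⟨n - 1, by lia⟩
    rw [← htr]
    exact h m hn
  · intro h n hn
    rw [htr]
    exact h (n + 1) (by lia) hn
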